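/- For every x ∈ S = (0,1) ∪ (1,∞), the derivative at x of the function y ↦ y·ρ′(y)/ρ(y) + k/(y−1) is strictly positive. -/

import Mathlib

open Polynomial Matrix

/-- The matrix `A_m(z)` with rows `(z + α β⁻¹, α + β)` and `(z(α⁻¹+β⁻¹), z + β α⁻¹)`. -/
noncomputable def aztecA (a b : ℝ) (z : ℂ) : Matrix (Fin 2) (Fin 2) ℂ :=
  !![z + (a : ℂ) * ((b : ℂ))⁻¹, (a : ℂ) + (b : ℂ);
     z * (((a : ℂ))⁻¹ + ((b : ℂ))⁻¹), z + (b : ℂ) * ((a : ℂ))⁻¹]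

/-- `T(z) = A_1(z) A_2(z) ⋯ A_k(z)`. -/
noncomputable def aztecT {k : ℕ} (α β : Fin k → ℝ) (z : ℂ) : Matrix (Fin 2) (Fin 2) ℂ :=
  (List.ofFn fun m => aztecA (α m) (β m) z).prod

/-- For a positive function `f` with value `f₀` and first two derivatives `f₁`, `f₂` at `x`, this is
`f x` times the derivative at `x` of `y ↦ y f′(y) / f(y)`. -/
noncomputable def eulerConvexity (x f₀ f₁ f₂ : ℝ) : ℝ :=
  f₁ + x * f₂ - x * f₁ ^ 2 / f₀

theorem eulerConvexity_add_le {x f₀ g₀ : ℝ} (hx : 0 ≤ x) (hf : 0 < f₀) (hg : 0 < g₀)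
    (f₁ f₂ g₁ g₂ : ℝ) :
    eulerConvexity x f₀ f₁ f₂ + eulerConvexity x g₀ g₁ g₂ ≤
      eulerConvexity x (f₀ + g₀) (f₁ + g₁) (f₂ + g₂) := by
  have h : (f₁ + g₁) ^ 2 / (f₀ + g₀) ≤ f₁ ^ 2 / f₀ + g₁ ^ 2 / g₀ := by
    rw [div_add_div _ _ hf.ne' hg.ne', div_le_div_iff₀ (by positivity) (by positivity)]
    nlinarith [mul_nonneg (mul_pos hf hg).le (sq_nonneg (f₁ * g₀ - g₁ * f₀))]
  have := mul_le_mul_of_nonneg_left h hx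
  simp only [eulerConvexity, mul_div_assoc]
  linarith

theorem eulerConvexity_mul {x f₀ g₀ : ℝ} (hf : f₀ ≠ 0) (hg : g₀ ≠ 0) (f₁ f₂ g₁ g₂ : ℝ) :
    eulerConvexity x (f₀ * g₀) (f₁ * g₀ + f₀ * g₁) (f₂ * g₀ + 2 * f₁ * g₁ + f₀ * g₂) =
      g₀ * eulerConvexity x f₀ f₁ f₂ + f₀ * eulerConvexity x g₀ g₁ g₂ := by
  simp only [eulerConvexity]
  field_simp
  ring

/-- The value of `eulerConvexity` for a polynomial. -/
noncomputable def polyConvexity (x : ℝ) (p : ℝ[X]) : ℝ :=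
  eulerConvexity x (p.eval x) (p.derivative.eval x) (p.derivative.derivative.eval x)

theorem polyConvexity_add_le {x : ℝ} (hx : 0 ≤ x) {p q : ℝ[X]} (hp : 0 < p.eval x)
    (hq : 0 < q.eval x) :
    polyConvexity x p + polyConvexity x q ≤ polyConvexity x (p + q) := by
  simpa [polyConvexity] using eulerConvexity_add_le hx hp hq _ _ _ _

theorem polyConvexity_mul {x : ℝ} {p q : ℝ[X]} (hp : p.eval x ≠ 0) (hq : q.eval x ≠ 0) :
    polyConvexity x (p * q) =
      q.eval x * polyConvexity x p + p.eval x * polyConvexity x q := by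
  simp only [polyConvexity]
  rw [← eulerConvexity_mul hp hq]
  congr 1 <;> simp
  ring

/-- All entries of a `2 × 2` polynomial matrix are positive at `x` with nonnegative convexity,
strictly so for the upper left entry. -/
structure ConvexEntries (x : ℝ) (M : Matrix (Fin 2) (Fin 2) ℝ[X]) : Prop where
  pos : ∀ i j, 0 < (M i j).eval x
  nonneg : ∀ i j, 0 ≤ polyConvexity x (M i j)
  strict : 0 < polyConvexity x (M 0 0)

theorem ConvexEntries.mul {x : ℝ} (hx : 0 ≤ x) {M N : Matrix (Fin 2) (Fin 2) ℝ[X]}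
    (hM : ConvexEntries x M) (hN : ConvexEntries x N) : ConvexEntries x (M * N) := by
  have key (i j l : Fin 2) : polyConvexity x (M i l * N l j) =
      (N l j).eval x * polyConvexity x (M i l) + (M i l).eval x * polyConvexity x (N l j) :=
    polyConvexity_mul (hM.pos _ _).ne' (hN.pos _ _).ne'
  have hpos (i j l : Fin 2) : 0 < (M i l * N l j).eval x := by
    rw [eval_mul]; exact mul_pos (hM.pos _ _) (hN.pos _ _)
  have hnonneg (i j l : Fin 2) : 0 ≤ polyConvexity x (M i l * N l j) := by
    rw [key]
    exact add_nonneg (mul_nonneg (hN.pos _ _).le (hM.nonneg _ _))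
      (mul_nonneg (hM.pos _ _).le (hN.nonneg _ _))
  have hadd (i j : Fin 2) := polyConvexity_add_le hx (hpos i j 0) (hpos i j 1)
  refine ⟨fun i j => ?_, fun i j => ?_, ?_⟩
  · rw [Matrix.mul_apply, Fin.sum_univ_two, eval_add]
    exact add_pos (hpos _ _ _) (hpos _ _ _)
  · rw [Matrix.mul_apply, Fin.sum_univ_two]
    exact (add_nonneg (hnonneg _ _ _) (hnonneg _ _ _)).trans (hadd i j)
  · rw [Matrix.mul_apply, Fin.sum_univ_two]
    refine lt_of_lt_of_le (add_pos_of_pos_of_nonneg ?_ (hnonneg _ _ _)) (hadd 0 0)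
    rw [key]
    exact add_pos (mul_pos (hN.pos _ _) hM.strict) (mul_pos (hM.pos _ _) hN.strict)

/-- The matrix `aztecA a b` with the variable `z` as an indeterminate. -/
noncomputable def polyA (a b : ℝ) : Matrix (Fin 2) (Fin 2) ℝ[X] :=
  !![X + C (a * b⁻¹), C (a + b); X * C (a⁻¹ + b⁻¹), X + C (b * a⁻¹)]

theorem det_polyA {a b : ℝ} (ha : a ≠ 0) (hb : b ≠ 0) : (polyA a b).det = (X - 1) ^ 2 := by
  have h₁ : (C a : ℝ[X]) * C a⁻¹ = 1 := by rw [← C_mul, mul_inv_cancel₀ ha, C_1]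
  have h₂ : (C b : ℝ[X]) * C b⁻¹ = 1 := by rw [← C_mul, mul_inv_cancel₀ hb, C_1]
  simp only [polyA, Matrix.det_fin_two_of, C_mul, C_add]
  linear_combination (C b * C b⁻¹ - X) * h₁ + (1 - X) * h₂

theorem convexEntries_polyA {x a b : ℝ} (hx : 0 < x) (ha : 0 < a) (hb : 0 < b) :
    ConvexEntries x (polyA a b) := by
  have hlin {c : ℝ} (hc : 0 < c) : 0 < polyConvexity x (X + C c) := by
    simp only [polyConvexity, eulerConvexity, derivative_add, derivative_X, derivative_C, add_zero,
      derivative_one, eval_add, eval_X, eval_C, eval_one, eval_zero]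
    have : x / (x + c) < 1 := by rw [div_lt_one (by positivity)]; linarith
    simpa using this
  have hmon {c : ℝ} (hc : 0 < c) : 0 ≤ polyConvexity x (X * C c) := by
    simp only [polyConvexity, eulerConvexity, derivative_mul, derivative_X, derivative_C,
      eval_mul, eval_X, eval_C, one_mul, mul_zero, add_zero, eval_zero]
    apply le_of_eq
    field_simp
    ring
  refine ⟨fun i j => ?_, fun i j => ?_, hlin (by positivity)⟩
  · fin_cases i <;> fin_cases j <;> simp [polyA] <;> positivity
  · fin_cases i <;> fin_cases j
    · exact (hlin (by positivity)).le
    · simp [polyA, polyConvexity, eulerConvexity]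
    · exact hmon (by positivity)
    · exact (hlin (by positivity)).le

/-- The matrix `aztecT α β` with the variable `z` as an indeterminate. -/
noncomputable def polyT {k : ℕ} (α β : Fin k → ℝ) : Matrix (Fin 2) (Fin 2) ℝ[X] :=
  (List.ofFn fun m => polyA (α m) (β m)).prod

theorem polyT_succ {k : ℕ} (α β : Fin (k + 1) → ℝ) :
    polyT α β = polyA (α 0) (β 0) * polyT (fun m => α m.succ) (fun m => β m.succ) := by
  simp [polyT, List.ofFn_succ]

theorem det_polyT {k : ℕ} {α β : Fin k → ℝ} (hα : ∀ m, α m ≠ 0) (hβ : ∀ m, β m ≠ 0) :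
    (polyT α β).det = ((X - 1) ^ k) ^ 2 := by
  induction k with
  | zero => simp [polyT]
  | succ k ih =>
    rw [polyT_succ, Matrix.det_mul, det_polyA (hα 0) (hβ 0),
      ih (fun m => hα m.succ) (fun m => hβ m.succ)]
    ring

theorem convexEntries_polyT {k : ℕ} {x : ℝ} (hx : 0 < x) {α β : Fin (k + 1) → ℝ}
    (hα : ∀ m, 0 < α m) (hβ : ∀ m, 0 < β m) : ConvexEntries x (polyT α β) := by
  induction k with
  | zero => simpa [polyT] using convexEntries_polyA hx (hα 0) (hβ 0)
  | succ k ih =>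
    rw [polyT_succ]
    exact (convexEntries_polyA hx (hα 0) (hβ 0)).mul hx.le
      (ih (fun m => hα m.succ) (fun m => hβ m.succ))

theorem aztecT_ofReal {k : ℕ} (α β : Fin k → ℝ) (x : ℝ) :
    aztecT α β (x : ℂ) = (polyT α β).map fun p => ((p.eval x : ℝ) : ℂ) := by
  have hA (a b : ℝ) : aztecA a b (x : ℂ) =
      (Complex.ofRealHom.comp (evalRingHom x)).mapMatrix (polyA a b) := by
    ext i j
    fin_cases i <;> fin_cases j <;> simp [aztecA, polyA]
  have : aztecT α β (x : ℂ) =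
      (Complex.ofRealHom.comp (evalRingHom x)).mapMatrix (polyT α β) := by
    rw [aztecT, polyT, map_list_prod, List.map_ofFn]
    simp only [hA]
    rfl
  rw [this]
  rfl

/-- The convexity of the large eigenvalue `l` of a positive `2 × 2` matrix with diagonal `a`, `d`
and off-diagonal product `g`, in terms of the 2-jets of these functions at `x`. -/
theorem eulerConvexity_eigenvalue_pos {x a₀ a₁ a₂ d₀ d₁ d₂ l₀ l₁ l₂ : ℝ} (hx : 0 ≤ x)
    (ha₀ : 0 < a₀) (hd₀ : 0 < d₀) (ha : 0 < eulerConvexity x a₀ a₁ a₂)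
    (hd : 0 ≤ eulerConvexity x d₀ d₁ d₂) (hla : a₀ < l₀) (hld : d₀ < l₀)
    (hg : 0 ≤ eulerConvexity x ((l₀ - a₀) * (l₀ - d₀))
      ((l₁ - a₁) * (l₀ - d₀) + (l₀ - a₀) * (l₁ - d₁))
      ((l₂ - a₂) * (l₀ - d₀) + 2 * (l₁ - a₁) * (l₁ - d₁) + (l₀ - a₀) * (l₂ - d₂))) :
    0 < eulerConvexity x l₀ l₁ l₂ := by
  have hu : 0 < l₀ - a₀ := sub_pos.2 hla
  have hv : 0 < l₀ - d₀ := sub_pos.2 hld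
  rw [eulerConvexity_mul hu.ne' hv.ne'] at hg
  have h₁ := eulerConvexity_add_le hx ha₀ hu a₁ a₂ (l₁ - a₁) (l₂ - a₂)
  have h₂ := eulerConvexity_add_le hx hd₀ hv d₁ d₂ (l₁ - d₁) (l₂ - d₂)
  simp only [add_sub_cancel] at h₁ h₂
  have h₃ := mul_le_mul_of_nonneg_left h₁ hv.le
  have h₄ := mul_le_mul_of_nonneg_left h₂ hu.le
  have h₅ := mul_pos hv ha
  have h₆ := mul_nonneg hu.le hd
  refine pos_of_mul_pos_right (a := (l₀ - a₀) + (l₀ - d₀)) ?_ (by positivity)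
  linarith

/-- If `D ρ² - (a + d) ρ + D = 0` with `|ρ| > 1` and `a d - g = D²`, then `D ρ` is the eigenvalue
exceeding both diagonal entries. -/
theorem lt_of_large_eigenvalue {D r a d g : ℝ} (ha : 0 < a) (hd : 0 < d) (hg : 0 < g)
    (hdet : a * d - g = D ^ 2) (hr : D * r ^ 2 - (a + d) * r + D = 0) (habs : 1 < |r|) :
    a < D * r ∧ d < D * r := by
  have hr0 : r ≠ 0 := by rintro rfl; norm_num at habs
  have hr1 : 1 < r ^ 2 := (one_lt_sq_iff_one_lt_abs r).2 habs
  have hprod : (D * r - a) * (D * r - d) = g := by linear_combination D * hr + hdet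
  have hsum : D * r * (r ^ 2 + 1) = (a + d) * r ^ 2 := by linear_combination r * hr
  have hlarge : 0 < (D * r - a) + (D * r - d) := by
    have : ((D * r - a) + (D * r - d)) * (r ^ 2 + 1) = (a + d) * (r ^ 2 - 1) := by
      linear_combination 2 * hsum
    refine pos_of_mul_pos_left (b := r ^ 2 + 1) ?_ (by positivity)
    rw [this]
    exact mul_pos (by positivity) (by linarith)
  constructor
  · by_contra! h
    nlinarith
  · by_contra! h
    nlinarith

/-- on `S = (0,1) ∪ (1,∞)`, the function `y ↦ y ρ′(y)/ρ(y) + k/(y−1)` has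
strictly positive derivative, where `ρ` is the large eigenvalue of `Φ` on `S`. -/
theorem stmt14 (k : ℕ) (hk : 1 ≤ k) (α β : Fin k → ℝ)
    (hα : ∀ m, 0 < α m) (hβ : ∀ m, 0 < β m)
    (hprod : ∏ m, α m = ∏ m, β m)
    (ρ : ℝ → ℝ)
    (hsmooth : ContDiffOn ℝ 2 ρ (Set.Ioo 0 1 ∪ Set.Ioi 1))
    (heig : ∀ x ∈ Set.Ioo (0 : ℝ) 1 ∪ Set.Ioi (1 : ℝ),
        ((x : ℂ) - 1) ^ k * ((ρ x : ℝ) : ℂ) ^ 2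
          - Matrix.trace (aztecT α β (x : ℂ)) * ((ρ x : ℝ) : ℂ)
          + ((x : ℂ) - 1) ^ k = 0)
    (habs : ∀ x ∈ Set.Ioo (0 : ℝ) 1 ∪ Set.Ioi (1 : ℝ), 1 < |ρ x|) :
    ∀ x ∈ Set.Ioo (0 : ℝ) 1 ∪ Set.Ioi (1 : ℝ),
      0 < deriv (fun y : ℝ => y * deriv ρ y / ρ y + (k : ℝ) / (y - 1)) x := by
  obtain ⟨k, rfl⟩ : ∃ n, k = n + 1 := ⟨k - 1, by omega⟩
  set S : Set ℝ := Set.Ioo 0 1 ∪ Set.Ioi 1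
  have hopen : IsOpen S := isOpen_Ioo.union isOpen_Ioi
  have hpos {y : ℝ} (hy : y ∈ S) : 0 < y := by
    rcases hy with h | h
    · exact h.1
    · exact one_pos.trans h
  have hne {y : ℝ} (hy : y ∈ S) : y - 1 ≠ 0 := by
    rcases hy with h | h
    · exact (sub_neg.2 h.2).ne
    · exact (sub_pos.2 h).ne'
  set M := polyT α β with hM
  have hentries {y : ℝ} (hy : y ∈ S) : ConvexEntries y M := convexEntries_polyT (hpos hy) hα hβ
  set a := M 0 0 with ha
  set d := M 1 1 with hd
  set g := M 0 1 * M 1 0 with hg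
  have hdet (y : ℝ) : a.eval y * d.eval y - g.eval y = ((y - 1) ^ (k + 1)) ^ 2 := by
    have := congrArg (eval y) (det_polyT (fun m => (hα m).ne') (fun m => (hβ m).ne'))
    simpa [Matrix.det_fin_two, ha, hd, hg, hM] using this
  have hquad {y : ℝ} (hy : y ∈ S) :
      (y - 1) ^ (k + 1) * ρ y ^ 2 - (a.eval y + d.eval y) * ρ y + (y - 1) ^ (k + 1) = 0 := by
    have := heig y hy
    rw [aztecT_ofReal, Matrix.trace_fin_two] at this
    simp only [Matrix.map_apply] at this
    exact_mod_cast this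
  set lam : ℝ → ℝ := fun y => (y - 1) ^ (k + 1) * ρ y with hlam
  have hlt {y : ℝ} (hy : y ∈ S) : a.eval y < lam y ∧ d.eval y < lam y := by
    have h := (hentries hy).pos
    refine lt_of_large_eigenvalue (h 0 0) (h 1 1) ?_ (hdet y) (hquad hy) (habs y hy)
    rw [eval_mul]
    exact mul_pos (h 0 1) (h 1 0)
  have hchar {y : ℝ} (hy : y ∈ S) : (lam y - a.eval y) * (lam y - d.eval y) = g.eval y := by
    simp only [hlam]
    linear_combination (y - 1) ^ (k + 1) * hquad hy + hdet y
  have hlamC : ContDiffOn ℝ 2 lam S :=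
    ContDiffOn.mul (ContDiff.contDiffOn (by fun_prop)) hsmooth
  have hlam₁ {y : ℝ} (hy : y ∈ S) : HasDerivAt lam (deriv lam y) y :=
    ((hlamC.contDiffAt (hopen.mem_nhds hy)).differentiableAt (by norm_num)).hasDerivAt
  have hlam₂ {y : ℝ} (hy : y ∈ S) : HasDerivAt (deriv lam) (deriv (deriv lam) y) y := by
    have : ContDiffOn ℝ 1 (deriv lam) S := hlamC.deriv_of_isOpen hopen (by norm_num)
    exact ((this.contDiffAt (hopen.mem_nhds hy)).differentiableAt (by norm_num)).hasDerivAt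
  have hchar₁ {y : ℝ} (hy : y ∈ S) :
      (deriv lam y - a.derivative.eval y) * (lam y - d.eval y) +
        (lam y - a.eval y) * (deriv lam y - d.derivative.eval y) = g.derivative.eval y := by
    refine HasDerivAt.unique (f := fun y => g.eval y) ?_ (g.hasDerivAt y)
    refine HasDerivAt.congr_of_eventuallyEq
      (((hlam₁ hy).sub (a.hasDerivAt y)).mul ((hlam₁ hy).sub (d.hasDerivAt y))) ?_
    filter_upwards [hopen.mem_nhds hy] with z hz using (hchar hz).symm
  have hchar₂ {y : ℝ} (hy : y ∈ S) :
      (deriv (deriv lam) y - a.derivative.derivative.eval y) * (lam y - d.eval y) +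
        2 * (deriv lam y - a.derivative.eval y) * (deriv lam y - d.derivative.eval y) +
        (lam y - a.eval y) * (deriv (deriv lam) y - d.derivative.derivative.eval y) =
      g.derivative.derivative.eval y := by
    have h := ((((hlam₂ hy).sub (a.derivative.hasDerivAt y)).mul
      ((hlam₁ hy).sub (d.hasDerivAt y))).add (((hlam₁ hy).sub (a.hasDerivAt y)).mul
      ((hlam₂ hy).sub (d.derivative.hasDerivAt y))))
    have h' := HasDerivAt.congr_of_eventuallyEq (f₁ := fun y => g.derivative.eval y) h (by
      filter_upwards [hopen.mem_nhds hy] with z hz using (hchar₁ hz).symm)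
    rw [← h'.unique (g.derivative.hasDerivAt y)]
    simp only [Pi.sub_apply]
    ring
  intro x hx
  have hE := hentries hx
  have hlamE : 0 < eulerConvexity x (lam x) (deriv lam x) (deriv (deriv lam) x) := by
    refine eulerConvexity_eigenvalue_pos (hpos hx).le (hE.pos 0 0) (hE.pos 1 1) hE.strict
      (hE.nonneg 1 1) (hlt hx).1 (hlt hx).2 ?_
    rw [← ha, ← hd, hchar hx, hchar₁ hx, hchar₂ hx]
    change 0 ≤ polyConvexity x (M 0 1 * M 1 0)
    rw [polyConvexity_mul (hE.pos _ _).ne' (hE.pos _ _).ne']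
    exact add_nonneg (mul_nonneg (hE.pos _ _).le (hE.nonneg _ _))
      (mul_nonneg (hE.pos _ _).le (hE.nonneg _ _))
  have hlampos : 0 < lam x := (hE.pos 0 0).trans (hlt hx).1
  have hF : (fun y : ℝ => y * deriv ρ y / ρ y + ((k + 1 : ℕ) : ℝ) / (y - 1)) =ᶠ[nhds x]
      fun y => y * deriv lam y / lam y - (k + 1) := by
    filter_upwards [hopen.mem_nhds hx] with y hy
    have hρ : HasDerivAt ρ (deriv ρ y) y :=
      ((hsmooth.contDiffAt (hopen.mem_nhds hy)).differentiableAt (by norm_num)).hasDerivAt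
    have hρ0 : ρ y ≠ 0 := abs_pos.1 (one_pos.trans (habs y hy))
    have hlam' : deriv lam y = (k + 1) * (y - 1) ^ k * ρ y + (y - 1) ^ (k + 1) * deriv ρ y := by
      refine ((((hasDerivAt_id y).sub_const 1).pow (k + 1)).mul hρ).deriv.trans ?_
      simp
    have hy1 := hne hy
    rw [hlam']
    simp only [hlam]
    push_cast
    field_simp
    ring
  have hderiv : HasDerivAt (fun y => y * deriv lam y / lam y - ((k : ℝ) + 1))
      (eulerConvexity x (lam x) (deriv lam x) (deriv (deriv lam) x) / lam x) x := by
    refine ((((hasDerivAt_id x).mul (hlam₂ hx)).div (hlam₁ hx) hlampos.ne').sub_const _).congr_deriv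
      ?_
    simp only [eulerConvexity, id, Pi.mul_apply]
    field_simp
  rw [hF.deriv_eq, hderiv.deriv]
  exact div_pos hlamE hlampos
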